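/- arXiv:1508.00345 — 5 statements merged into one kernel-verified Lean document; each statement's English description precedes it below -/
import Mathlib

section
/- Let R be a Bezout domain of Krull dimension at most 1. Then R is a Smith ring: for every matrix A ∈ M_{n×m}(R) there exist invertible matrices L ∈ GL_n(R) and C ∈ GL_m(R) such that the matrix B = L·A·C is in Smith form, i.e., B i j = 0 whenever the indices i and j are distinct (as natural numbers), and the diagonal entry B i i divides the diagonal entry B j j whenever i ≤ j. -/
/-! Over a Bezout domain satisfying Kaplansky's condition, some value `u ⬝ᵥ A *ᵥ v` of the bilinear
form attached to `A` divides all entries of `A`. The vectors `u` and `v` are multiples of first rows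
of invertible matrices, so `A` is equivalent to a matrix whose corner divides every entry; clearing
the first row and column and recursing yields the Smith form.

In a domain of dimension at most one, `R ⧸ (a)` is zero-dimensional for `a ≠ 0`, hence has stable
range one, and this gives Kaplansky's condition. -/

open Matrix

/-- Kaplansky's condition on a commutative ring: whenever `a`, `b`, `c` generate the unit ideal, so
do `p * a` and `p * b + q * c` for some `p` and `q`. It characterises the Bezout domains over which
every matrix has a Smith form. -/
def KaplanskyCondition (R : Type*) [CommRing R] : Prop :=
  ∀ a b c : R, (∃ x y z, x * a + y * b + z * c = 1) → ∃ p q, IsCoprime (p * a) (p * b + q * c)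

section StableRange

variable {R : Type*} [CommRing R]

theorem exists_pow_mul_one_sub_mul_eq_zero [Ring.KrullDimLE 0 R] (b : R) :
    ∃ (n : ℕ) (x : R), b ^ n * (1 - b * x) = 0 := by
  by_contra! h_ne
  let S : Submonoid R :=
    { carrier := {y | ∃ (n : ℕ) (x : R), b ^ n * (1 - b * x) = y}
      one_mem' := ⟨0, 0, by simp⟩
      mul_mem' := by
        rintro _ _ ⟨n, x, rfl⟩ ⟨m, y, rfl⟩
        exact ⟨n + m, x + y - b * x * y, by ring⟩ }
  have h_disjoint : Disjoint ((⊥ : Ideal R) : Set R) S := by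
    rw [Set.disjoint_left]
    rintro _ rfl ⟨n, x, hx⟩
    exact h_ne n x hx
  obtain ⟨P, hP, -, hPS⟩ := Ideal.exists_le_prime_disjoint _ S h_disjoint
  rw [Set.disjoint_left] at hPS
  have hb : b ∉ P := fun hb => hPS hb ⟨1, 0, by simp⟩
  obtain ⟨x, i, hi, hx⟩ := hP.isMaximal'.exists_inv hb
  exact hPS hi ⟨0, x, by linear_combination -hx⟩

-- Every maximal ideal contains exactly one of `b` and the multiplier `1 - b * x` of `c`.
theorem exists_isUnit_add_mul [Ring.KrullDimLE 0 R] {b c : R} (hbc : IsCoprime b c) :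
    ∃ q, IsUnit (b + q * c) := by
  obtain ⟨n, x, hx⟩ := exists_pow_mul_one_sub_mul_eq_zero b
  obtain ⟨s, t, hst⟩ := hbc
  refine ⟨1 - b * x, ?_⟩
  by_contra h_nonunit
  obtain ⟨M, hM, h_mem⟩ := exists_max_ideal_of_mem_nonunits h_nonunit
  have h_one : (1 : R) ∉ M := M.one_notMem
  have h_not_mem : b ∉ M := fun hb => by
    have hc : c ∈ M := by
      convert M.sub_mem h_mem (M.mul_mem_left (1 - x * c) hb) using 1; ring
    exact h_one (hst ▸ M.add_mem (M.mul_mem_left s hb) (M.mul_mem_left t hc))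
  rcases hM.isPrime.mem_or_mem (hx ▸ M.zero_mem) with h_pow | h_compl
  · exact h_not_mem (hM.isPrime.mem_of_pow_mem n h_pow)
  · exact h_not_mem ((M.add_mem_iff_left (M.mul_mem_right c h_compl)).1 h_mem)

theorem krullDimLE_zero_quotient_span_singleton [Ring.DimensionLEOne R] {a : R} (ha : a ≠ 0) :
    Ring.KrullDimLE 0 (R ⧸ Ideal.span {a}) := by
  refine Ideal.krullDimLE_zero_quotient_iff_forall_minimalPrimes_isMaximal.2 fun P hP => ?_
  refine hP.1.1.isMaximal fun hP_bot => ha ?_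
  simpa [hP_bot] using hP.1.2

theorem kaplanskyCondition_of_dimensionLEOne [Ring.DimensionLEOne R] :
    KaplanskyCondition R := by
  rintro a b c ⟨x, y, z, hxyz⟩
  rcases eq_or_ne a 0 with rfl | ha
  · exact ⟨y, z, 0, 1, by linear_combination hxyz⟩
  · have := krullDimLE_zero_quotient_span_singleton ha
    let π := Ideal.Quotient.mk (Ideal.span {a})
    have hπ_coprime : IsCoprime (π b) (π c) := by
      refine ⟨π y, π z, ?_⟩
      rw [← map_mul, ← map_mul, ← map_add, ← map_one π, Ideal.Quotient.mk_eq_mk_iff_sub_mem,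
        Ideal.mem_span_singleton]
      exact ⟨-x, by linear_combination hxyz⟩
    obtain ⟨q', hq'⟩ := exists_isUnit_add_mul hπ_coprime
    obtain ⟨q, rfl⟩ := Ideal.Quotient.mk_surjective q'
    obtain ⟨u', hu'⟩ := hq'.exists_left_inv
    obtain ⟨u, rfl⟩ := Ideal.Quotient.mk_surjective u'
    rw [← map_mul, ← map_add, ← map_mul, ← map_one π, Ideal.Quotient.mk_eq_mk_iff_sub_mem,
      Ideal.mem_span_singleton] at hu'
    obtain ⟨r, hr⟩ := hu'
    exact ⟨1, q, -r, u, by linear_combination hr⟩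

end StableRange

section Content

variable {R ι : Type*} [CommRing R] [IsBezout R] [Fintype ι]

theorem exists_dotProduct_dvd (u : ι → R) : ∃ y : ι → R, ∀ i, u ⬝ᵥ y ∣ u i := by
  have h_principal : (Ideal.span (Set.range u)).IsPrincipal :=
    IsBezout.isPrincipal_of_FG _ (Submodule.fg_span (Set.finite_range u))
  obtain ⟨y, hy⟩ := Ideal.mem_span_range_iff_exists_fun.1
    (Submodule.IsPrincipal.generator_mem (Ideal.span (Set.range u)))
  refine ⟨y, fun i => ?_⟩
  rw [dotProduct_comm, dotProduct, hy, ← Submodule.IsPrincipal.mem_iff_generator_dvd]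
  exact Ideal.subset_span (Set.mem_range_self i)

variable [IsDomain R]

theorem exists_eq_smul_unimodular [Nonempty ι] (u : ι → R) :
    ∃ (c : R) (x y : ι → R), u = c • x ∧ x ⬝ᵥ y = 1 := by
  classical
  obtain ⟨y, hy⟩ := exists_dotProduct_dvd u
  choose x hx using hy
  rcases eq_or_ne (u ⬝ᵥ y) 0 with hc | hc
  · let i : ι := Classical.arbitrary ι
    refine ⟨0, Pi.single i 1, Pi.single i 1, ?_, by simp⟩
    ext j
    simp [hx j, hc]
  · have hu : u = (u ⬝ᵥ y) • x := funext hx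
    refine ⟨u ⬝ᵥ y, x, y, hu, mul_left_cancel₀ hc ?_⟩
    rw [mul_one, ← smul_eq_mul, ← smul_dotProduct, ← hu]

theorem KaplanskyCondition.exists_combination_dvd (hR : KaplanskyCondition R) (a b c : R) :
    ∃ p q y z : R, p * (b * y + a * z) + q * (c * y) ∣ a ∧
      p * (b * y + a * z) + q * (c * y) ∣ b ∧ p * (b * y + a * z) + q * (c * y) ∣ c := by
  obtain ⟨g, x, w, hgx, hxw⟩ := exists_eq_smul_unimodular ![a, b, c]
  obtain ⟨p, q, z, y, hzy⟩ := hR (x 0) (x 1) (x 2)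
    ⟨w 0, w 1, w 2, by rw [← hxw, dotProduct_comm, dotProduct, Fin.sum_univ_three]⟩
  have ha : a = g * x 0 := congrFun hgx 0
  have hb : b = g * x 1 := congrFun hgx 1
  have hc : c = g * x 2 := congrFun hgx 2
  have h_eq : p * (b * y + a * z) + q * (c * y) = g := by
    rw [ha, hb, hc]
    linear_combination g * hzy
  exact ⟨p, q, y, z, by rw [h_eq, ha, hb, hc]; simp⟩

theorem KaplanskyCondition.exists_dotProduct_dvd_pair (hR : KaplanskyCondition R) (a b : ι → R) :
    ∃ (p q : R) (v : ι → R), ∀ j,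
      p * (a ⬝ᵥ v) + q * (b ⬝ᵥ v) ∣ a j ∧ p * (a ⬝ᵥ v) + q * (b ⬝ᵥ v) ∣ b j := by
  cases isEmpty_or_nonempty ι
  · exact ⟨0, 0, 0, isEmptyElim⟩
  obtain ⟨c, g, y, rfl, hgy⟩ := exists_eq_smul_unimodular b
  obtain ⟨w, hw⟩ := exists_dotProduct_dvd (a - (a ⬝ᵥ y) • g)
  obtain ⟨p, q, s, t, h_dvd_w, h_dvd_y, h_dvd_c⟩ :=
    hR.exists_combination_dvd ((a - (a ⬝ᵥ y) • g) ⬝ᵥ w) (a ⬝ᵥ y) c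
  -- `w - (g ⬝ᵥ w) • y` lies in the kernel of `g`, and `a` takes there the value of
  -- `a - (a ⬝ᵥ y) • g` at `w`.
  refine ⟨p, q, s • y + t • (w - (g ⬝ᵥ w) • y), fun j => ?_⟩
  have ha_v : a ⬝ᵥ (s • y + t • (w - (g ⬝ᵥ w) • y)) =
      (a ⬝ᵥ y) * s + ((a - (a ⬝ᵥ y) • g) ⬝ᵥ w) * t := by
    simp only [dotProduct_add, dotProduct_sub, dotProduct_smul, sub_dotProduct,
      smul_dotProduct, smul_eq_mul]
    ring
  have hb_v : (c • g) ⬝ᵥ (s • y + t • (w - (g ⬝ᵥ w) • y)) = c * s := by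
    simp only [dotProduct_add, dotProduct_sub, dotProduct_smul, smul_dotProduct, smul_eq_mul,
      hgy]
    ring
  rw [ha_v, hb_v]
  constructor
  · have ha_j : a j = (a - (a ⬝ᵥ y) • g) j + (a ⬝ᵥ y) * g j := by simp
    rw [ha_j]
    exact dvd_add (h_dvd_w.trans (hw j)) (h_dvd_y.mul_right _)
  · exact h_dvd_c.mul_right _

theorem KaplanskyCondition.exists_dotProduct_mulVec_dvd (hR : KaplanskyCondition R) {n : ℕ}
    (A : Matrix (Fin n) ι R) :
    ∃ (u : Fin n → R) (v : ι → R), ∀ i j, u ⬝ᵥ A *ᵥ v ∣ A i j := by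
  induction n with
  | zero => exact ⟨0, 0, fun i => i.elim0⟩
  | succ n ih =>
    let T : Matrix (Fin n) ι R := A.submatrix Fin.succ id
    obtain ⟨u, w, h_tail⟩ := ih T
    obtain ⟨p, q, v, hv⟩ := hR.exists_dotProduct_dvd_pair (A 0) (u ᵥ* T)
    have h_eq : vecCons p (q • u) ⬝ᵥ A *ᵥ v = p * (A 0 ⬝ᵥ v) + q * ((u ᵥ* T) ⬝ᵥ v) := by
      rw [cons_dotProduct, smul_dotProduct, ← dotProduct_mulVec]
      rfl
    refine ⟨vecCons p (q • u), v, fun i j => ?_⟩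
    rw [h_eq]
    refine Fin.cases (hv j).1 (fun i => ?_) i
    have h_dvd : p * (A 0 ⬝ᵥ v) + q * ((u ᵥ* T) ⬝ᵥ v) ∣ u ⬝ᵥ T *ᵥ w := by
      rw [dotProduct_mulVec]
      exact Finset.dvd_sum fun k _ => (hv k).2.mul_right _
    exact h_dvd.trans (h_tail i j)

end Content

section Bordered

variable {R : Type*} {n m : ℕ}

/-- The block matrix with corner `a`, first row `r`, first column `c` and remaining block `X`,
used to reduce matrices by induction on their size. -/
def bordered (a : R) (r : Fin m → R) (c : Fin n → R) (X : Matrix (Fin n) (Fin m) R) :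
    Matrix (Fin (n + 1)) (Fin (m + 1)) R :=
  of (vecCons (vecCons a r) fun i => vecCons (c i) (X i))

section Entries

variable (a : R) (r : Fin m → R) (c : Fin n → R) (X : Matrix (Fin n) (Fin m) R)

@[simp] theorem bordered_apply_zero_zero : bordered a r c X 0 0 = a := rfl

@[simp] theorem bordered_apply_zero_succ (j : Fin m) : bordered a r c X 0 j.succ = r j := rfl

@[simp] theorem bordered_apply_succ_zero (i : Fin n) : bordered a r c X i.succ 0 = c i := rfl

@[simp] theorem bordered_apply_succ_succ (i : Fin n) (j : Fin m) :
    bordered a r c X i.succ j.succ = X i j := rfl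

end Entries

variable [CommRing R]

theorem bordered_mul_bordered {k : ℕ} (a a' : R) (r : Fin m → R) (c : Fin n → R)
    (X : Matrix (Fin n) (Fin m) R) (r' : Fin k → R) (c' : Fin m → R)
    (X' : Matrix (Fin m) (Fin k) R) :
    bordered a r c X * bordered a' r' c' X' =
      bordered (a * a' + r ⬝ᵥ c') (a • r' + r ᵥ* X') (a' • c + X *ᵥ c')
        (vecMulVec c r' + X * X') := by
  ext i j
  cases i using Fin.cases <;> cases j using Fin.cases <;>
    simp [Matrix.mul_apply, Fin.sum_univ_succ, dotProduct, vecMul, mulVec, vecMulVec_apply,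
      mul_comm]

theorem bordered_one : bordered (1 : R) 0 0 (1 : Matrix (Fin n) (Fin n) R) = 1 := by
  ext i j
  cases i using Fin.cases <;> cases j using Fin.cases <;>
    simp [one_apply, Fin.succ_ne_zero, (Fin.succ_ne_zero _).symm]

theorem isUnit_bordered_one_zero_zero {L : Matrix (Fin n) (Fin n) R} (hL : IsUnit L) :
    IsUnit (bordered 1 0 0 L) := by
  obtain ⟨M, hM⟩ := hL.exists_right_inv
  refine IsUnit.of_mul_eq_one (bordered 1 0 0 M) ?_
  simp [bordered_mul_bordered, hM, bordered_one]

theorem isUnit_bordered_one_zero_col (c : Fin n → R) :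
    IsUnit (bordered 1 0 c (1 : Matrix (Fin n) (Fin n) R)) := by
  refine IsUnit.of_mul_eq_one (bordered 1 0 (-c) 1) ?_
  simp [bordered_mul_bordered, bordered_one]

theorem isUnit_bordered_one_row_zero (r : Fin n → R) :
    IsUnit (bordered 1 r 0 (1 : Matrix (Fin n) (Fin n) R)) := by
  refine IsUnit.of_mul_eq_one (bordered 1 (-r) 0 1) ?_
  simp [bordered_mul_bordered, bordered_one]

-- For `n = 1` and `x = y = 1` this is the matrix of determinant one with rows `(p, q)` and
-- `(-t, s)`; in general it acts that way on the plane spanned by `e₀` and `(0, y)`, and fixes every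
-- `(0, w)` with `x ⬝ᵥ w = 0`.
theorem isUnit_bordered_of_dotProduct_eq_one {p q s t : R} (hpq : p * s + q * t = 1)
    {x y : Fin n → R} (hxy : x ⬝ᵥ y = 1) :
    IsUnit (bordered p (q • x) (-t • y) (1 + (s - 1) • vecMulVec y x)) := by
  refine IsUnit.of_mul_eq_one
    (bordered s (-q • x) (t • y) (1 + (p - 1) • vecMulVec y x)) ?_
  rw [bordered_mul_bordered, ← bordered_one]
  congr 1
  · simp only [smul_dotProduct, dotProduct_smul, hxy, smul_eq_mul, mul_one]
    linear_combination hpq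
  · simp only [neg_smul, smul_neg, smul_smul, vecMul_add, vecMul_one, vecMul_smul,
      vecMul_vecMulVec, smul_dotProduct, hxy, smul_eq_mul, mul_one]
    module
  · simp only [neg_smul, smul_neg, mulVec_smul, add_mulVec, one_mulVec, smul_mulVec,
      vecMulVec_mulVec, hxy, MulOpposite.op_one, one_smul, smul_add]
    module
  · simp only [neg_smul, vecMulVec_neg, vecMulVec_smul, neg_vecMulVec, smul_vecMulVec, smul_neg,
      smul_smul, neg_neg, mul_add, mul_one, mul_smul_comm, add_mul, one_mul,
      smul_mul_assoc, vecMulVec_mul_vecMulVec, hxy, one_smul, smul_add]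
    linear_combination (norm := module) hpq • vecMulVec y x

theorem exists_isUnit_eq_smul_row [IsDomain R] [IsBezout R] (u : Fin (n + 1) → R) :
    ∃ (L : Matrix (Fin (n + 1)) (Fin (n + 1)) R) (c : R), IsUnit L ∧ u = c • L 0 := by
  rcases n with _ | n
  · exact ⟨1, u 0, isUnit_one, funext fun i => by simp [Fin.fin_one_eq_zero i]⟩
  obtain ⟨c, x, y, hu_tail, hxy⟩ := exists_eq_smul_unimodular (vecTail u)
  obtain ⟨g, pq, st, hpq, hst⟩ := exists_eq_smul_unimodular ![vecHead u, c]
  have h_coprime : pq 0 * st 0 + pq 1 * st 1 = 1 := by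
    rw [← hst, dotProduct, Fin.sum_univ_two]
  refine ⟨_, g, isUnit_bordered_of_dotProduct_eq_one h_coprime hxy, ?_⟩
  have h_head : u 0 = g * pq 0 := congrFun hpq 0
  have hc : c = g * pq 1 := congrFun hpq 1
  ext i
  cases i using Fin.cases with
  | zero => simpa using h_head
  | succ i =>
    have h_tail : u i.succ = c * x i := congrFun hu_tail i
    simp [h_tail, hc, mul_assoc]

end Bordered

section MatrixEquivalent

variable {R ι κ : Type*} [CommRing R] [Fintype ι] [DecidableEq ι] [Fintype κ] [DecidableEq κ]

/-- Two matrices are equivalent if they differ by multiplication by invertible matrices on the left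
and on the right. -/
def MatrixEquivalent (A B : Matrix ι κ R) : Prop :=
  ∃ (L : Matrix ι ι R) (C : Matrix κ κ R), IsUnit L ∧ IsUnit C ∧ L * A * C = B

namespace MatrixEquivalent

variable {A B D : Matrix ι κ R}

theorem refl (A : Matrix ι κ R) : MatrixEquivalent A A :=
  ⟨1, 1, isUnit_one, isUnit_one, by simp⟩

theorem trans (hAB : MatrixEquivalent A B) (hBD : MatrixEquivalent B D) :
    MatrixEquivalent A D := by
  obtain ⟨L, C, hL, hC, rfl⟩ := hAB
  obtain ⟨L', C', hL', hC', rfl⟩ := hBD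
  exact ⟨L' * L, C * C', hL'.mul hL, hC.mul hC', by simp only [Matrix.mul_assoc]⟩

theorem dvd_apply (hAB : MatrixEquivalent A B) {d : R} (hA : ∀ i j, d ∣ A i j)
    (i : ι) (j : κ) : d ∣ B i j := by
  obtain ⟨L, C, -, -, rfl⟩ := hAB
  simp only [Matrix.mul_apply]
  exact Finset.dvd_sum fun k _ =>
    (Finset.dvd_sum fun l _ => (hA l k).mul_left _).mul_right _

end MatrixEquivalent

end MatrixEquivalent

section SmithForm

variable {R : Type*} [CommRing R] {n m : ℕ}

theorem MatrixEquivalent.bordered_zero_zero {A B : Matrix (Fin n) (Fin m) R}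
    (hAB : MatrixEquivalent A B) (d : R) :
    MatrixEquivalent (bordered d 0 0 A) (bordered d 0 0 B) := by
  obtain ⟨L, C, hL, hC, rfl⟩ := hAB
  refine ⟨bordered 1 0 0 L, bordered 1 0 0 C, isUnit_bordered_one_zero_zero hL,
    isUnit_bordered_one_zero_zero hC, ?_⟩
  simp [bordered_mul_bordered]

/-- A rectangular matrix is in Smith form if it vanishes off the main diagonal and each diagonal
entry divides the later ones. Rows and columns are compared through their values in `ℕ`. -/
structure IsSmithForm (B : Matrix (Fin n) (Fin m) R) : Prop where
  apply_eq_zero (i : Fin n) (j : Fin m) (hij : (i : ℕ) ≠ (j : ℕ)) : B i j = 0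
  diag_dvd_diag (i j : ℕ) (hin : i < n) (him : i < m) (hjn : j < n) (hjm : j < m) (hij : i ≤ j) :
    B ⟨i, hin⟩ ⟨i, him⟩ ∣ B ⟨j, hjn⟩ ⟨j, hjm⟩

theorem IsSmithForm.bordered_zero_zero {d : R} {X : Matrix (Fin n) (Fin m) R} (hX : IsSmithForm X)
    (hd : ∀ i j, d ∣ X i j) : IsSmithForm (bordered d 0 0 X) where
  apply_eq_zero i j hij := by
    cases i using Fin.cases <;> cases j using Fin.cases
    · exact absurd rfl hij
    · rfl
    · rfl
    · exact hX.apply_eq_zero _ _ (by simpa using hij)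
  diag_dvd_diag i j hin him hjn hjm hij := by
    rcases i with _ | i <;> rcases j with _ | j
    · exact dvd_rfl
    · exact hd ⟨j, by omega⟩ ⟨j, by omega⟩
    · omega
    · exact hX.diag_dvd_diag i j (by omega) (by omega) (by omega) (by omega) (by omega)

theorem exists_matrixEquivalent_bordered_of_dvd {B : Matrix (Fin (n + 1)) (Fin (m + 1)) R}
    (hB : ∀ i j, B 0 0 ∣ B i j) :
    ∃ X : Matrix (Fin n) (Fin m) R, MatrixEquivalent B (bordered (B 0 0) 0 0 X) := by
  choose Q hQ using hB
  let r : Fin m → R := fun j => Q 0 j.succ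
  let c : Fin n → R := fun i => Q i.succ 0
  let Y : Matrix (Fin n) (Fin m) R := of fun i j => Q i.succ j.succ
  have hB_eq : B = bordered (B 0 0) (B 0 0 • r) (B 0 0 • c) (B 0 0 • Y) := by
    ext i j
    cases i using Fin.cases <;> cases j using Fin.cases
    · rfl
    · exact hQ 0 _
    · exact hQ _ 0
    · exact hQ _ _
  refine ⟨B 0 0 • (Y - vecMulVec c r), bordered 1 0 (-c) 1, bordered 1 (-r) 0 1,
    isUnit_bordered_one_zero_col _, isUnit_bordered_one_row_zero _, ?_⟩
  nth_rw 1 [hB_eq]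
  simp [bordered_mul_bordered, smul_sub, neg_add_eq_sub]

variable [IsDomain R] [IsBezout R]

theorem KaplanskyCondition.exists_matrixEquivalent_corner_dvd (hR : KaplanskyCondition R)
    (A : Matrix (Fin (n + 1)) (Fin (m + 1)) R) :
    ∃ B, MatrixEquivalent A B ∧ ∀ i j, B 0 0 ∣ B i j := by
  obtain ⟨u, v, huv⟩ := hR.exists_dotProduct_mulVec_dvd A
  obtain ⟨L, c, hL, rfl⟩ := exists_isUnit_eq_smul_row u
  obtain ⟨C, c', hC, rfl⟩ := exists_isUnit_eq_smul_row v
  have h_equiv : MatrixEquivalent A (L * A * Cᵀ) :=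
    ⟨L, Cᵀ, hL, (isUnit_transpose C).2 hC, rfl⟩
  have h_corner : (L * A * Cᵀ) 0 0 = L 0 ⬝ᵥ A *ᵥ C 0 := by
    rw [Matrix.mul_assoc]
    rfl
  refine ⟨L * A * Cᵀ, h_equiv, h_equiv.dvd_apply fun i j => ?_⟩
  rw [h_corner]
  refine dvd_trans ?_ (huv i j)
  rw [smul_dotProduct, mulVec_smul, dotProduct_smul]
  exact (dvd_mul_left _ _).mul_left _

theorem stmt_0_general (hR : KaplanskyCondition R) (A : Matrix (Fin n) (Fin m) R) :
    ∃ B, MatrixEquivalent A B ∧ IsSmithForm B := by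
  induction n generalizing m with
  | zero => exact ⟨A, .refl A, by omega, by omega⟩
  | succ n ih =>
    rcases m with _ | m
    · exact ⟨A, .refl A, by omega, by omega⟩
    obtain ⟨B, hAB, hB⟩ := hR.exists_matrixEquivalent_corner_dvd A
    obtain ⟨X, hBX⟩ := exists_matrixEquivalent_bordered_of_dvd hB
    obtain ⟨Y, hXY, hY⟩ := ih X
    have hX : ∀ i j, B 0 0 ∣ X i j := fun i j => hBX.dvd_apply hB i.succ j.succ
    exact ⟨_, hAB.trans (hBX.trans (hXY.bordered_zero_zero _)),
      hY.bordered_zero_zero (hXY.dvd_apply hX)⟩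

end SmithForm

theorem dimensionLEOne_of_not_lt_lt {R : Type*} [CommRing R] [IsDomain R]
    (hdim : ∀ p q r : Ideal R, p.IsPrime → q.IsPrime → r.IsPrime → p < q → q < r → False) :
    Ring.DimensionLEOne R where
  maximalOfPrime {p} hp_ne_bot hp := by
    obtain ⟨M, hM, hpM⟩ := Ideal.exists_le_maximal p hp.ne_top
    obtain rfl | h_lt := hpM.eq_or_lt
    · exact hM
    · exact (hdim ⊥ p M Ideal.isPrime_bot hp hM.isPrime hp_ne_bot.bot_lt h_lt).elim

/-- A Bezout domain of Krull dimension at most 1 is a Smith ring: every matrix is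
equivalent to a matrix in Smith form. -/
theorem stmt_0 {R : Type*} [CommRing R] [IsDomain R] [IsBezout R]
    (hdim : ∀ p q r : Ideal R, p.IsPrime → q.IsPrime → r.IsPrime → p < q → q < r → False)
    {n m : ℕ} (A : Matrix (Fin n) (Fin m) R) :
    ∃ (L : Matrix (Fin n) (Fin n) R) (C : Matrix (Fin m) (Fin m) R),
      IsUnit L ∧ IsUnit C ∧
      (∀ (i : Fin n) (j : Fin m), (i : ℕ) ≠ (j : ℕ) → (L * A * C) i j = 0) ∧
      (∀ (i j : ℕ) (hin : i < n) (him : i < m) (hjn : j < n) (hjm : j < m), i ≤ j →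
        (L * A * C) ⟨i, hin⟩ ⟨i, him⟩ ∣ (L * A * C) ⟨j, hjn⟩ ⟨j, hjm⟩) := by
  have := dimensionLEOne_of_not_lt_lt hdim
  obtain ⟨_, ⟨L, C, hL, hC, rfl⟩, h_smith⟩ := stmt_0_general kaplanskyCondition_of_dimensionLEOne A
  exact ⟨L, C, hL, hC, h_smith.apply_eq_zero, h_smith.diag_dvd_diag⟩
end

section
/- Let R be a Prüfer domain, A ∈ M_{n×m}(R) and B ∈ R^n (viewed as a column). Then the linear system A·X = B has a solution X ∈ R^m if and only if for every k ≥ 1 the determinantal ideal of order k of the augmented matrix [A | B] (of size n×(m+1)) equals the determinantal ideal of order k of A, i.e., D_k([A|B]) = D_k(A) for all k. -/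
/-- The determinantal ideal of order `k` of a matrix: the ideal generated by all
`k × k` minors. -/
def detIdeal {R : Type*} [CommRing R] {n m : ℕ}
    (M : Matrix (Fin n) (Fin m) R) (k : ℕ) : Ideal R :=
  Ideal.span { x : R | ∃ (r : Fin k → Fin n) (c : Fin k → Fin m),
    x = (M.submatrix r c).det }

/-- The augmented matrix `[A | B]`. -/
def augment {R : Type*} [CommRing R] {n m : ℕ}
    (A : Matrix (Fin n) (Fin m) R) (B : Fin n → R) : Matrix (Fin n) (Fin (m + 1)) R :=
  Matrix.of fun i j => if h : (j : ℕ) < m then A i ⟨j, h⟩ else B i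

/-!
Let `k` be the largest order for which `I := D_k(A)` is nonzero. As `D_{k+1}([A | B]) = 0`,
expanding each minor of order `k + 1` along its first row, with the other `k` rows fixed, gives
Cramer's rule with minors as coefficients: `I • ⟨B⟩ ≤ I • range A`. Over a Prüfer domain `I` is
invertible, so it cancels and `B ∈ range A`. Conversely, if `A * X = B` then
`[A | B] = A * [1 | X]`, and the minors of a product are linear combinations of minors of its left
factor.
-/

theorem det_mul_eq_sum_prod_mul_det_submatrix {R ι κ : Type*} [CommRing R] [Fintype ι]
    [DecidableEq ι] [Fintype κ] (M : Matrix ι κ R) (N : Matrix κ ι R) :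
    (M * N).det = ∑ f : ι → κ, (∏ i, N (f i) i) * (M.submatrix id f).det := by
  simp only [Matrix.det_apply', Matrix.mul_apply, Finset.prod_univ_sum, Finset.mul_sum,
    Fintype.piFinset_univ, Matrix.submatrix_apply, id_eq]
  rw [Finset.sum_comm]
  simp only [Finset.prod_mul_distrib, mul_comm, mul_assoc]

theorem det_submatrix_cons_eq_sum {R ι κ : Type*} [CommRing R] {k : ℕ} (M : Matrix ι κ R) (i : ι)
    (r : Fin k → ι) (c : Fin (k + 1) → κ) :
    (M.submatrix (Fin.cons i r : Fin (k + 1) → ι) c).det =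
      ∑ j : Fin (k + 1), (-1) ^ (j : ℕ) * M i (c j) * (M.submatrix r (c ∘ j.succAbove)).det :=
  Matrix.det_succ_row_zero _

theorem le_of_ideal_smul_le_ideal_smul {R M : Type*} [CommSemiring R] [AddCommMonoid M]
    [Module R M] {I J : Ideal R} {a : R} (hIJ : I * J = Ideal.span {a})
    (ha : IsSMulRegular M a) {N P : Submodule R M} (h : I • N ≤ I • P) : N ≤ P := by
  have ideal_smul_eq (Q : Submodule R M) : J • I • Q = Ideal.span {a} • Q := by
    rw [← hIJ, mul_comm, Submodule.mul_smul]
  have scaled_le : Ideal.span {a} • N ≤ Ideal.span {a} • P := by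
    simpa only [ideal_smul_eq] using smul_mono_right J h
  intro x hx
  have smul_mem : a • x ∈ Ideal.span {a} • P :=
    scaled_le (Submodule.smul_mem_smul (Ideal.mem_span_singleton_self a) hx)
  rw [Submodule.ideal_span_singleton_smul] at smul_mem
  obtain ⟨y, hy, hyx⟩ := smul_mem
  exact ha hyx ▸ hy

section DetIdeal

variable {R : Type*} [CommRing R] {n m p k : ℕ}

theorem det_submatrix_mem_detIdeal (M : Matrix (Fin n) (Fin m) R) (r : Fin k → Fin n)
    (c : Fin k → Fin m) : (M.submatrix r c).det ∈ detIdeal M k :=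
  Ideal.subset_span ⟨r, c, rfl⟩

theorem detIdeal_le_iff {M : Matrix (Fin n) (Fin m) R} {I : Ideal R} :
    detIdeal M k ≤ I ↔
      ∀ (r : Fin k → Fin n) (c : Fin k → Fin m), (M.submatrix r c).det ∈ I := by
  refine ⟨fun h r c => h (det_submatrix_mem_detIdeal M r c), fun h => Ideal.span_le.2 ?_⟩
  rintro _ ⟨r, c, rfl⟩
  exact h r c

theorem detIdeal_zero (M : Matrix (Fin n) (Fin m) R) : detIdeal M 0 = ⊤ := by
  rw [Ideal.eq_top_iff_one, ← Matrix.det_fin_zero (A := M.submatrix Fin.elim0 Fin.elim0)]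
  exact det_submatrix_mem_detIdeal M _ _

theorem detIdeal_eq_bot_of_lt (M : Matrix (Fin n) (Fin m) R) (h : m < k) : detIdeal M k = ⊥ := by
  rw [eq_bot_iff, detIdeal_le_iff]
  intro r c
  obtain ⟨i, j, hij, hc⟩ := Fintype.exists_ne_map_eq_of_card_lt c (by simpa using h)
  exact Matrix.det_zero_of_column_eq hij fun a => by simp only [Matrix.submatrix_apply, hc]

theorem exists_detIdeal_ne_bot_and_succ_eq_bot [Nontrivial R] (M : Matrix (Fin n) (Fin m) R) :
    ∃ k, detIdeal M k ≠ ⊥ ∧ detIdeal M (k + 1) = ⊥ :=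
  Nat.exists_not_and_succ_of_not_zero_of_exists (p := fun k => detIdeal M k = ⊥)
    (by simp [detIdeal_zero]) ⟨m + 1, detIdeal_eq_bot_of_lt M m.lt_succ_self⟩

theorem detIdeal_fg (M : Matrix (Fin n) (Fin m) R) (k : ℕ) : (detIdeal M k).FG := by
  have minors_finite : (Set.range fun s : (Fin k → Fin n) × (Fin k → Fin m) =>
      (M.submatrix s.1 s.2).det).Finite := Set.finite_range _
  refine Submodule.fg_span (minors_finite.subset ?_)
  rintro _ ⟨r, c, rfl⟩
  exact ⟨(r, c), rfl⟩

theorem detIdeal_submatrix_le {n' m' : ℕ} (M : Matrix (Fin n) (Fin m) R) (f : Fin n' → Fin n)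
    (g : Fin m' → Fin m) (k : ℕ) : detIdeal (M.submatrix f g) k ≤ detIdeal M k :=
  detIdeal_le_iff.2 fun r c => det_submatrix_mem_detIdeal M (f ∘ r) (g ∘ c)

theorem detIdeal_mul_le_left (M : Matrix (Fin n) (Fin m) R) (N : Matrix (Fin m) (Fin p) R)
    (k : ℕ) : detIdeal (M * N) k ≤ detIdeal M k := by
  refine detIdeal_le_iff.2 fun r c => ?_
  rw [Matrix.submatrix_mul M N r id c Function.bijective_id,
    det_mul_eq_sum_prod_mul_det_submatrix]
  exact Ideal.sum_mem _ fun f _ => Ideal.mul_mem_left _ _ (det_submatrix_mem_detIdeal M r f)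

theorem sum_minor_smul_col_eq_zero {M : Matrix (Fin n) (Fin m) R} (h : detIdeal M (k + 1) = ⊥)
    (r : Fin k → Fin n) (c : Fin (k + 1) → Fin m) :
    ∑ j : Fin (k + 1), ((-1) ^ (j : ℕ) * (M.submatrix r (c ∘ j.succAbove)).det)
      • M.col (c j) = 0 := by
  funext i
  have bordered_minor_eq_zero : (M.submatrix (Fin.cons i r : Fin (k + 1) → Fin n) c).det = 0 := by
    rw [← Ideal.mem_bot, ← h]
    exact det_submatrix_mem_detIdeal M _ c
  simpa only [det_submatrix_cons_eq_sum, mul_right_comm, Finset.sum_apply, Pi.smul_apply,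
    smul_eq_mul, Matrix.col_apply, Pi.zero_apply] using bordered_minor_eq_zero

end DetIdeal

section Augment

variable {R : Type*} [CommRing R] {n m k : ℕ}

theorem augment_apply_castSucc (A : Matrix (Fin n) (Fin m) R) (B : Fin n → R) (i : Fin n)
    (j : Fin m) : augment A B i j.castSucc = A i j := by
  simp [augment]

theorem augment_apply_last (A : Matrix (Fin n) (Fin m) R) (B : Fin n → R) (i : Fin n) :
    augment A B i (Fin.last m) = B i := by
  simp [augment]

theorem augment_col_castSucc (A : Matrix (Fin n) (Fin m) R) (B : Fin n → R) (j : Fin m) :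
    (augment A B).col j.castSucc = A.col j :=
  funext fun i => augment_apply_castSucc A B i j

theorem augment_col_last (A : Matrix (Fin n) (Fin m) R) (B : Fin n → R) :
    (augment A B).col (Fin.last m) = B :=
  funext fun i => augment_apply_last A B i

theorem augment_submatrix_castSucc (A : Matrix (Fin n) (Fin m) R) (B : Fin n → R) :
    (augment A B).submatrix id Fin.castSucc = A :=
  Matrix.ext fun i j => augment_apply_castSucc A B i j

theorem augment_mulVec (A : Matrix (Fin n) (Fin m) R) (X : Fin m → R) :
    augment A (A.mulVec X) = A * augment 1 X := by
  ext i j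
  induction j using Fin.lastCases with
  | last => simp [augment_apply_last, Matrix.mul_apply, Matrix.mulVec, dotProduct]
  | cast j => simp [augment_apply_castSucc, Matrix.mul_apply, Matrix.one_apply]

theorem detIdeal_le_detIdeal_augment (A : Matrix (Fin n) (Fin m) R) (B : Fin n → R) (k : ℕ) :
    detIdeal A k ≤ detIdeal (augment A B) k := by
  simpa only [augment_submatrix_castSucc] using
    detIdeal_submatrix_le (augment A B) id Fin.castSucc k

theorem detIdeal_augment_mulVec (A : Matrix (Fin n) (Fin m) R) (X : Fin m → R) (k : ℕ) :
    detIdeal (augment A (A.mulVec X)) k = detIdeal A k := by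
  refine le_antisymm ?_ (detIdeal_le_detIdeal_augment A _ k)
  rw [augment_mulVec]
  exact detIdeal_mul_le_left A _ k

theorem minor_smul_mem_smul_range {A : Matrix (Fin n) (Fin m) R} {B : Fin n → R}
    (h : detIdeal (augment A B) (k + 1) = ⊥) (r : Fin k → Fin n) (c : Fin k → Fin m) :
    (A.submatrix r c).det • B ∈ detIdeal (augment A B) k • LinearMap.range A.mulVecLin := by
  let c' : Fin (k + 1) → Fin (m + 1) := Fin.cons (Fin.last m) (Fin.castSucc ∘ c)
  have minor_zero : (augment A B).submatrix r (c' ∘ Fin.succAbove 0) = A.submatrix r c :=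
    Matrix.ext fun a b => augment_apply_castSucc A B (r a) (c b)
  have cramer : (A.submatrix r c).det • B +
      ∑ j : Fin k, ((-1) ^ (j.succ : ℕ) *
        ((augment A B).submatrix r (c' ∘ j.succ.succAbove)).det) • A.col (c j) = 0 := by
    simpa only [Fin.sum_univ_succ, minor_zero, c', Fin.cons_zero, Fin.cons_succ,
      augment_col_last, Function.comp_apply, augment_col_castSucc, Fin.val_zero, pow_zero,
      one_mul] using sum_minor_smul_col_eq_zero h r c'
  rw [eq_neg_of_add_eq_zero_left cramer]
  refine neg_mem (sum_mem fun j _ => Submodule.smul_mem_smul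
    (Ideal.mul_mem_left _ _ (det_submatrix_mem_detIdeal _ r _)) ?_)
  exact ⟨Pi.single (c j) 1, A.mulVec_single_one (c j)⟩

theorem detIdeal_smul_span_le_smul_range {A : Matrix (Fin n) (Fin m) R} {B : Fin n → R}
    (h : detIdeal (augment A B) (k + 1) = ⊥) :
    detIdeal A k • Submodule.span R {B} ≤
      detIdeal (augment A B) k • LinearMap.range A.mulVecLin := by
  rw [detIdeal, Submodule.span_smul_span, Submodule.span_le]
  rintro _ ⟨_, ⟨r, c, rfl⟩, b, hb, rfl⟩
  obtain rfl : b = B := hb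
  exact minor_smul_mem_smul_range h r c

theorem exists_mulVec_eq_of_detIdeal_augment_eq {A : Matrix (Fin n) (Fin m) R} {B : Fin n → R}
    {J : Ideal R} {a : R} (ha : IsSMulRegular R a) (hJ : detIdeal A k * J = Ideal.span {a})
    (hk : detIdeal (augment A B) k = detIdeal A k) (hk' : detIdeal (augment A B) (k + 1) = ⊥) :
    ∃ X : Fin m → R, A.mulVec X = B := by
  have span_le_range : Submodule.span R {B} ≤ LinearMap.range A.mulVecLin :=
    le_of_ideal_smul_le_ideal_smul hJ (IsSMulRegular.pi fun _ => ha)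
      (by simpa only [hk] using detIdeal_smul_span_le_smul_range hk')
  exact span_le_range (Submodule.mem_span_singleton_self B)

end Augment

/-- Over a Prüfer domain, the system `A·X = B` has a solution iff the determinantal
ideals of `[A | B]` coincide with those of `A`. -/
theorem stmt_3 {R : Type*} [CommRing R] [IsDomain R]
    (hpruf : ∀ I : Ideal R, I.FG → I ≠ ⊥ →
      ∃ (J : Ideal R) (c : R), J.FG ∧ c ≠ 0 ∧ I * J = Ideal.span {c})
    {n m : ℕ} (A : Matrix (Fin n) (Fin m) R) (B : Fin n → R) :
    (∃ X : Fin m → R, A.mulVec X = B) ↔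
      ∀ k : ℕ, 1 ≤ k → detIdeal (augment A B) k = detIdeal A k := by
  constructor
  · rintro ⟨X, rfl⟩ k -
    exact detIdeal_augment_mulVec A X k
  · intro h
    obtain ⟨k, hk, hk'⟩ := exists_detIdeal_ne_bot_and_succ_eq_bot A
    obtain ⟨J, a, -, ha, hJ⟩ := hpruf _ (detIdeal_fg A k) hk
    have detIdeal_augment_eq : detIdeal (augment A B) k = detIdeal A k := by
      rcases k.eq_zero_or_pos with rfl | hpos
      · rw [detIdeal_zero, detIdeal_zero]
      · exact h k hpos
    exact exists_mulVec_eq_of_detIdeal_augment_eq (IsSMulRegular.of_ne_zero ha) hJ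
      detIdeal_augment_eq ((h _ k.succ_pos).trans hk')
end

section
/- Let R be a Prüfer domain and let φ : E → H be an R-linear map between finitely generated projective R-modules. Then the saturation of the image of φ, namely the submodule S = {x ∈ H | ∃ d ∈ R, d ≠ 0 and d·x ∈ range φ}, is a direct summand of H: there exists a submodule N of H with S ⊓ N = ⊥ and S ⊔ N = H. -/
/-!
Let `P` be a submodule of a finitely generated module `H`, and write `Q` for the quotient of `H ⧸ P`
by its torsion. The saturation of `P` is the kernel of the surjection `H → Q`, so it has a
complement as soon as `Q` is projective. Now `Q` is finitely generated and torsion-free, hence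
embeds in some `Rⁿ`; splitting off one coordinate at a time exhibits it as an iterated direct sum of
finitely generated ideals of `R`, and these are projective because they are invertible.
-/

open scoped nonZeroDivisors

section Splitting

variable {R M P : Type*} [Ring R] [AddCommGroup M] [Module R M] [AddCommGroup P] [Module R P]

theorem exists_isCompl_ker_of_surjective [Module.Projective R P] {g : M →ₗ[R] P}
    (hg : Function.Surjective g) : ∃ N : Submodule R M, IsCompl (LinearMap.ker g) N := by
  obtain ⟨s, hs⟩ := Module.projective_lifting_property g LinearMap.id hg
  have ker_s : LinearMap.ker s = ⊥ :=
    LinearMap.ker_eq_bot.mpr (LinearMap.injective_of_comp_eq_id s g hs)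
  have idem : IsIdempotentElem (s ∘ₗ g) := by
    change s ∘ₗ (g ∘ₗ s) ∘ₗ g = s ∘ₗ g
    rw [hs, LinearMap.id_comp]
  refine ⟨LinearMap.range (s ∘ₗ g), ?_⟩
  rw [← LinearMap.ker_comp_of_ker_eq_bot g ker_s]
  exact (LinearMap.IsIdempotentElem.isCompl idem).symm

theorem exists_equiv_ker_prod_of_surjective [Module.Projective R P] {g : M →ₗ[R] P}
    (hg : Function.Surjective g) : Nonempty (M ≃ₗ[R] LinearMap.ker g × P) := by
  obtain ⟨N, hN⟩ := exists_isCompl_ker_of_surjective hg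
  let equivP : N ≃ₗ[R] P :=
    (Submodule.quotientEquivOfIsCompl _ N hN).symm ≪≫ₗ g.quotKerEquivOfSurjective hg
  exact ⟨(Submodule.prodEquivOfIsCompl _ N hN).symm ≪≫ₗ (LinearEquiv.refl R _).prodCongr equivP⟩

end Splitting

/-- A (left) semihereditary ring: every finitely generated (left) ideal is projective. The
semihereditary integral domains are exactly the Prüfer domains. -/
class IsSemihereditary (R : Type*) [Ring R] : Prop where
  projective_of_fg : ∀ I : Ideal R, I.FG → Module.Projective R I

theorem ideal_projective_of_mul_eq_span_singleton {R : Type*} [CommRing R] {I J : Ideal R} {c : R}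
    (hc : c ∈ R⁰) (hIJ : I * J = Ideal.span {c}) : Module.Projective R I := by
  let K := FractionRing R
  have unit_c : IsUnit (Submodule.span R {algebraMap R K c}) :=
    (IsLocalization.map_units K (⟨c, hc⟩ : R⁰)).map (Submodule.spanSingleton R)
  have unit_I : IsUnit (IsLocalization.coeSubmodule K I) := by
    rw [← IsLocalization.coeSubmodule_span_singleton, ← hIJ,
      IsLocalization.coeSubmodule_mul] at unit_c
    exact isUnit_of_mul_isUnit_left unit_c
  have : Module.Projective R (Submodule.map (Algebra.linearMap R K) I) :=
    Submodule.projective_of_isUnit unit_I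
  exact .of_equiv (Submodule.equivMapOfInjective (Algebra.linearMap R K)
    (IsFractionRing.injective R K) I).symm

theorem isSemihereditary_of_exists_mul_eq_span_singleton {R : Type*} [CommRing R] [IsDomain R]
    (h : ∀ I : Ideal R, I.FG → I ≠ ⊥ →
      ∃ (J : Ideal R) (c : R), c ≠ 0 ∧ I * J = Ideal.span {c}) : IsSemihereditary R where
  projective_of_fg I hI := by
    obtain rfl | hI_ne := eq_or_ne I ⊥
    · infer_instance
    · obtain ⟨J, c, hc, hIJ⟩ := h I hI hI_ne
      exact ideal_projective_of_mul_eq_span_singleton (mem_nonZeroDivisors_of_ne_zero hc) hIJ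

theorem projective_of_finite_of_injective_pi {R : Type*} [Ring R] [IsSemihereditary R] {n : ℕ}
    {M : Type*} [AddCommGroup M] [Module R M] [Module.Finite R M] {f : M →ₗ[R] Fin n → R}
    (hf : Function.Injective f) : Module.Projective R M := by
  induction n generalizing M with
  | zero =>
    have : Subsingleton M := hf.subsingleton
    infer_instance
  | succ n ih =>
    let f₀ : M →ₗ[R] R := LinearMap.proj 0 ∘ₗ f
    have : Module.Projective R (LinearMap.range f₀) :=
      IsSemihereditary.projective_of_fg _ (Module.Finite.iff_fg.mp inferInstance)
    obtain ⟨e⟩ := exists_equiv_ker_prod_of_surjective f₀.surjective_rangeRestrict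
    let K := LinearMap.ker f₀.rangeRestrict
    have : Module.Finite R K :=
      .of_surjective (LinearMap.fst R K _ ∘ₗ e.toLinearMap)
        (Prod.fst_surjective.comp e.surjective)
    let tail : K →ₗ[R] Fin n → R := LinearMap.funLeft R R Fin.succ ∘ₗ f ∘ₗ K.subtype
    have tail_injective : Function.Injective tail := by
      refine (injective_iff_map_eq_zero tail).mpr fun x hx ↦ Subtype.ext ?_
      refine (injective_iff_map_eq_zero f).mp hf x (funext fun i ↦ ?_)
      cases i using Fin.cases with
      | zero => exact congrArg Subtype.val x.2
      | succ j => exact congrFun hx j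
    have : Module.Projective R K := ih tail_injective
    exact .of_equiv e.symm

section TorsionFree

variable (R M : Type*) [CommRing R] [IsDomain R] [AddCommGroup M] [Module R M] [Module.Finite R M]

theorem exists_free_finite_isTorsion_quotient :
    ∃ N : Submodule R M, Module.Free R N ∧ Module.Finite R N ∧ Module.IsTorsion R (M ⧸ N) := by
  obtain ⟨s, indep, maximal⟩ := exists_maximal_linearIndepOn R (id : M → M)
  rw [Set.image_id] at maximal
  have : Finite s := indep.linearIndependent.finite
  have span_eq : Submodule.span R (Set.range fun x : s ↦ id (x : M)) = Submodule.span R s :=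
    congrArg _ Subtype.range_coe
  let b := (Module.Basis.span indep.linearIndependent).map (.ofEq _ _ span_eq)
  refine ⟨Submodule.span R s, .of_basis b, .of_basis b, fun x ↦ ?_⟩
  obtain ⟨x, rfl⟩ := Submodule.mkQ_surjective _ x
  suffices ∃ a : R, a ≠ 0 ∧ a • x ∈ Submodule.span R s by
    obtain ⟨a, ha, hax⟩ := this
    refine ⟨⟨a, mem_nonZeroDivisors_of_ne_zero ha⟩, ?_⟩
    exact (Submodule.Quotient.mk_eq_zero _).mpr hax
  by_cases hx : x ∈ s
  · exact ⟨1, one_ne_zero, Submodule.smul_mem _ _ (Submodule.subset_span hx)⟩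
  · exact maximal x hx

theorem exists_injective_pi_of_isTorsionFree [Module.IsTorsionFree R M] :
    ∃ (n : ℕ) (f : M →ₗ[R] Fin n → R), Function.Injective f := by
  obtain ⟨N, _, _, hN⟩ := exists_free_finite_isTorsion_quotient R M
  obtain ⟨d, hd_ann, hd⟩ := Submodule.annihilator_top_inter_nonZeroDivisors hN
  have smul_mem_N (x : M) : LinearMap.lsmul R M d x ∈ N := by
    rw [LinearMap.lsmul_apply, ← Submodule.Quotient.mk_eq_zero, Submodule.Quotient.mk_smul]
    exact Submodule.mem_annihilator.mp hd_ann _ Submodule.mem_top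
  let e := (Module.finBasis R N).equivFun
  refine ⟨_, e.toLinearMap ∘ₗ (LinearMap.lsmul R M d).codRestrict N smul_mem_N,
    e.injective.comp ((Set.injective_codRestrict smul_mem_N).mpr ?_)⟩
  exact LinearMap.lsmul_injective (nonZeroDivisors.ne_zero hd)

theorem projective_of_finite_of_isTorsionFree [IsSemihereditary R] [Module.IsTorsionFree R M] :
    Module.Projective R M := by
  obtain ⟨n, f, hf⟩ := exists_injective_pi_of_isTorsionFree R M
  exact projective_of_finite_of_injective_pi hf

end TorsionFree

section Saturation

variable {R M : Type*} [CommRing R] [AddCommGroup M] [Module R M] (P : Submodule R M)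

/-- The saturation of a submodule `P` of `M`: the elements of `M` having a multiple in `P` by a
non-zero-divisor. It is encoded as the preimage of the torsion of `M ⧸ P`, which makes it the kernel
of the projection of `M` onto a torsion-free module. -/
def saturation : Submodule R M :=
  (Submodule.torsion R (M ⧸ P)).comap P.mkQ

theorem coe_saturation [IsDomain R] :
    (saturation P : Set M) = {x | ∃ d : R, d ≠ 0 ∧ d • x ∈ P} := by
  ext x
  simp [saturation, ← Submodule.Quotient.mk_smul]

theorem exists_isCompl_saturation
    [Module.Projective R ((M ⧸ P) ⧸ Submodule.torsion R (M ⧸ P))] :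
    ∃ N, IsCompl (saturation P) N := by
  let T := Submodule.torsion R (M ⧸ P)
  have ker_eq : LinearMap.ker (T.mkQ ∘ₗ P.mkQ) = saturation P := by
    rw [LinearMap.ker_comp, T.ker_mkQ, saturation]
  rw [← ker_eq]
  exact exists_isCompl_ker_of_surjective (T.mkQ_surjective.comp P.mkQ_surjective)

end Saturation

theorem stmt_10_general {R : Type*} [CommRing R] [IsDomain R] [IsSemihereditary R]
    {H : Type*} [AddCommGroup H] [Module R H] [Module.Finite R H] (P : Submodule R H) :
    ∃ S N : Submodule R H,
      (↑S = {x : H | ∃ d : R, d ≠ 0 ∧ d • x ∈ P}) ∧ S ⊓ N = ⊥ ∧ S ⊔ N = ⊤ := by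
  have := projective_of_finite_of_isTorsionFree R ((H ⧸ P) ⧸ Submodule.torsion R (H ⧸ P))
  obtain ⟨N, hN⟩ := exists_isCompl_saturation P
  exact ⟨saturation P, N, coe_saturation P, hN.inf_eq_bot, hN.sup_eq_top⟩

/-- Over a Prüfer domain, the saturation of the image of a linear map between finitely
generated projective modules is a direct summand of the target. -/
theorem stmt_10 {R : Type*} [CommRing R] [IsDomain R]
    (hpruf : ∀ I : Ideal R, I.FG → I ≠ ⊥ →
      ∃ (J : Ideal R) (c : R), J.FG ∧ c ≠ 0 ∧ I * J = Ideal.span {c})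
    {E H : Type*} [AddCommGroup E] [Module R E] [AddCommGroup H] [Module R H]
    [Module.Finite R E] [Module.Projective R E]
    [Module.Finite R H] [Module.Projective R H]
    (φ : E →ₗ[R] H) :
    ∃ S N : Submodule R H,
      (↑S = {x : H | ∃ d : R, d ≠ 0 ∧ d • x ∈ LinearMap.range φ}) ∧
      S ⊓ N = ⊥ ∧ S ⊔ N = ⊤ := by
  have : IsSemihereditary R := isSemihereditary_of_exists_mul_eq_span_singleton
    fun I hI hI_ne ↦ let ⟨J, c, _, hc, hIJ⟩ := hpruf I hI hI_ne; ⟨J, c, hc, hIJ⟩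
  exact stmt_10_general (LinearMap.range φ)
end

section
/- Let R be a commutative ring, n ∈ ℕ, and let a : Fin n → R satisfy a i ∣ a j whenever i ≤ j (the diagonal matrix Diag(a_1,…,a_n) is in Smith form). Let u : Fin n → Rˣ be units with ∏_i u_i = 1, and set a'_i = a_i·u_i. Then the diagonal matrices Diag(a_1,…,a_n) and Diag(a'_1,…,a'_n) are elementarily equivalent: there exist matrices L and C in M_n(R), each a finite product of transvection matrices (matrices of the form 1 + c·E_{ij} with i ≠ j), such that L · Diag(a) · C = Diag(a'). -/
/-!
Column operations by transvections turn a pair of columns `(x, y)` into `(v x, v⁻¹ y)`: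
`(x, y) ⟶ (x, y - v x) ⟶ (v x + (v⁻¹ - 1) y, y - v x) ⟶ (v x + (v⁻¹ - 1) y, v⁻¹ y) ⟶ (v x, v⁻¹ y)`.
A family of units of product `1` is a product of families with entries `v` and `v⁻¹` at two indices
and `1` elsewhere, so the corresponding diagonal matrix is itself a product of transvections, and
multiplying by it on the right rescales the columns of any diagonal matrix.
-/

open Finset in
theorem mem_of_mulSingle_div_mulSingle_mem_of_prod_eq_one {ι G : Type*} [Fintype ι] [DecidableEq ι]
    [CommGroup G] {S : Submonoid (ι → G)}
    (hS : ∀ i j, i ≠ j → ∀ g : G, Pi.mulSingle i g / Pi.mulSingle j g ∈ S)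
    {f : ι → G} (hf : ∏ i, f i = 1) : f ∈ S := by
  rcases isEmpty_or_nonempty ι with _ | ⟨⟨j⟩⟩
  · exact Subsingleton.elim 1 f ▸ S.one_mem
  have prod_mulSingle_eq_one : ∏ i, Pi.mulSingle j (f i) = (1 : ι → G) := by
    simpa [hf] using (map_prod (MonoidHom.mulSingle (fun _ : ι ↦ G) j) f univ).symm
  have factorization : f = ∏ i, Pi.mulSingle i (f i) / Pi.mulSingle j (f i) := by
    rw [prod_div_distrib, univ_prod_mulSingle, prod_mulSingle_eq_one, div_one]
  rw [factorization]
  refine S.prod_mem fun i _ ↦ ?_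
  rcases eq_or_ne i j with rfl | hij
  · simp
  · exact hS i j hij (f i)

section Elementary

open Matrix

/-- The submonoid of matrices that are finite products of transvections. It is the elementary
group `E_n(R)`, taken inside the matrix ring because `TransvectionStruct.toMatrix` is matrix-valued;
as inverses of transvections are transvections, a submonoid suffices. -/
def elementarySubmonoid (n R : Type*) [Fintype n] [DecidableEq n] [CommRing R] :
    Submonoid (Matrix n n R) :=
  Submonoid.closure (Set.range TransvectionStruct.toMatrix)

variable {n R : Type*} [Fintype n] [DecidableEq n] [CommRing R]

theorem mem_elementarySubmonoid_iff {M : Matrix n n R} :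
    M ∈ elementarySubmonoid n R ↔
      ∃ ts : List (TransvectionStruct n R), (ts.map TransvectionStruct.toMatrix).prod = M := by
  rw [elementarySubmonoid, ← FreeMonoid.mrange_lift, MonoidHom.mem_mrange]
  exact FreeMonoid.toList.exists_congr fun _ ↦ by rw [FreeMonoid.lift_apply]

theorem transvection_mem_elementarySubmonoid {i j : n} (hij : i ≠ j) (c : R) :
    transvection i j c ∈ elementarySubmonoid n R :=
  Submonoid.subset_closure ⟨⟨i, j, hij, c⟩, rfl⟩

theorem mul_transvections_eq_mul_diagonal {m : Type*} (M : Matrix m n R) {i j : n}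
    (hij : i ≠ j) (v : Rˣ) :
    M * transvection i j (-(v : R)) * transvection j i ((↑v⁻¹ : R) - 1) * transvection i j (1 : R) *
        transvection j i ((v : R) - 1) =
      M * diagonal fun k ↦ (((Pi.mulSingle i v / Pi.mulSingle j v : n → Rˣ) k : Rˣ) : R) := by
  have hv : (v : R) * ↑v⁻¹ = 1 := v.mul_inv
  ext k l
  rw [mul_diagonal]
  rcases eq_or_ne l i with rfl | hli
  · simp only [mul_transvection_apply_same, mul_transvection_apply_of_ne, ne_eq, hij, hij.symm,
      not_false_eq_true, Pi.div_apply, Pi.mulSingle_eq_same, Pi.mulSingle_eq_of_ne, div_one]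
    linear_combination (-M k l * v) * hv + M k j * hv
  · rcases eq_or_ne l j with rfl | hlj
    · simp only [mul_transvection_apply_same, mul_transvection_apply_of_ne, ne_eq, hij, hij.symm,
        not_false_eq_true, Pi.div_apply, Pi.mulSingle_eq_same, Pi.mulSingle_eq_of_ne, one_div]
      linear_combination (-M k i) * hv
    · simp [hli, hlj]

theorem diagonal_mulSingle_div_mulSingle_mem_elementarySubmonoid {i j : n} (hij : i ≠ j) (v : Rˣ) :
    diagonal (fun k ↦ (((Pi.mulSingle i v / Pi.mulSingle j v : n → Rˣ) k : Rˣ) : R)) ∈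
      elementarySubmonoid n R := by
  rw [← one_mul (diagonal _), ← mul_transvections_eq_mul_diagonal 1 hij, one_mul]
  have mem_ij := transvection_mem_elementarySubmonoid (R := R) hij
  have mem_ji := transvection_mem_elementarySubmonoid (R := R) hij.symm
  exact mul_mem (mul_mem (mul_mem (mem_ij _) (mem_ji _)) (mem_ij _)) (mem_ji _)

theorem diagonal_units_mem_elementarySubmonoid {u : n → Rˣ} (hu : ∏ i, u i = 1) :
    diagonal (fun i ↦ (u i : R)) ∈ elementarySubmonoid n R := by
  let unitsDiagonal : (n → Rˣ) →* Matrix n n R :=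
    (diagonalRingHom n R).toMonoidHom.comp ((Units.coeHom R).compLeft n)
  exact mem_of_mulSingle_div_mulSingle_mem_of_prod_eq_one
    (S := (elementarySubmonoid n R).comap unitsDiagonal)
    (fun _ _ hij ↦ diagonal_mulSingle_div_mulSingle_mem_elementarySubmonoid hij) hu

theorem stmt_15_general (a : n → R) {u : n → Rˣ} (hu : ∏ i, u i = 1) :
    ∃ cs : List (TransvectionStruct n R),
      diagonal a * (cs.map TransvectionStruct.toMatrix).prod =
        diagonal fun i ↦ a i * (u i : R) := by
  obtain ⟨cs, hcs⟩ := mem_elementarySubmonoid_iff.mp (diagonal_units_mem_elementarySubmonoid hu)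
  exact ⟨cs, by rw [hcs, diagonal_mul_diagonal]⟩

end Elementary

/-- A diagonal matrix in Smith form is elementarily equivalent to the diagonal matrix
obtained by multiplying the entries by units of product `1`. -/
theorem stmt_15 {R : Type*} [CommRing R] {n : ℕ}
    (a : Fin n → R) (ha : ∀ i j : Fin n, i ≤ j → a i ∣ a j)
    (u : Fin n → Rˣ) (hu : (∏ i, u i) = 1) :
    ∃ (L C : Matrix (Fin n) (Fin n) R),
      (∃ ls : List (Matrix.TransvectionStruct (Fin n) R),
        L = (ls.map Matrix.TransvectionStruct.toMatrix).prod) ∧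
      (∃ cs : List (Matrix.TransvectionStruct (Fin n) R),
        C = (cs.map Matrix.TransvectionStruct.toMatrix).prod) ∧
      L * Matrix.diagonal a * C = Matrix.diagonal (fun i => a i * (u i : R)) := by
  obtain ⟨cs, hcs⟩ := stmt_15_general a hu
  exact ⟨1, _, ⟨[], rfl⟩, ⟨cs, rfl⟩, by rw [one_mul, hcs]⟩
end

section
/- Let R be a Prüfer domain of Krull dimension at most 1. Every finitely presented torsion R-module M (i.e., every element of M is annihilated by some nonzero element of R) is isomorphic to a direct sum ⊕_{i=1}^n R/a_i, where a_1 ⊇ a_2 ⊇ ⋯ ⊇ a_n is a decreasing chain of nonzero finitely generated (hence invertible) ideals of R. -/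
/-!
Torsion makes `M` a module over `A = R ⧸ (d)` for a single `d ≠ 0`. Dimension at most one makes `A`
zero-dimensional, so every `t : A` is a unit or nilpotent up to an idempotent. The Prüfer condition
says that divisibility is total locally, hence, over `A`, up to an idempotent. Such a ring behaves
like a valuation ring in Gaussian elimination: among the entries of finitely many vectors one
divides all the others, after gluing different choices of pivot along idempotents. This puts every
finitely generated submodule of `Aⁿ` in Smith normal form.
-/

/-- Arithmetical rings, those in which the ideals of every localization at a prime are totally
ordered. The encoding is elementwise: `Spec A` is covered by the open sets `D(t)`, where `b`
divides `a`, and `D(1 - t)`, where `a` divides `b`. -/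
def IsArithmetical (A : Type*) [CommRing A] : Prop :=
  ∀ a b : A, ∃ t : A, b ∣ t * a ∧ a ∣ (1 - t) * b

/-- Divisibility in `A` is total up to an idempotent: for all `a` and `b` there is a decomposition
`A = eA × (1 - e)A` such that `b` divides `a` in the first factor and `a` divides `b` in the
second. Over such rings matrices can be diagonalized. -/
def DvdTotalUpToIdempotent (A : Type*) [CommRing A] : Prop :=
  ∀ a b : A, ∃ e : A, IsIdempotentElem e ∧ b ∣ e * a ∧ a ∣ (1 - e) * b

section Arithmetical

variable {R A : Type*} [CommRing R] [CommRing A]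

theorem exists_dvd_mul_of_span_pair_mul_eq {a b c : R} {J : Ideal R} (hc : c ∈ nonZeroDivisors R)
    (hJ : Ideal.span {a, b} * J = Ideal.span {c}) : ∃ t : R, b ∣ t * a ∧ a ∣ (1 - t) * b := by
  have dvd_mul {x q : R} (hx : x ∈ Ideal.span {a, b}) (hq : q ∈ J) : c ∣ x * q := by
    rw [← Ideal.mem_span_singleton, ← hJ]
    exact Ideal.mul_mem_mul hx hq
  have ha : a ∈ Ideal.span {a, b} := Ideal.subset_span (by simp)
  have hb : b ∈ Ideal.span {a, b} := Ideal.subset_span (by simp)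
  obtain ⟨p, hp, q, hq, hpq⟩ : ∃ p ∈ J, ∃ q ∈ J, a * p + b * q = c := by
    have hc' : c ∈ Ideal.span {a, b} * J := hJ ▸ Ideal.mem_span_singleton_self c
    simpa [Ideal.span_insert, Ideal.sup_mul, Submodule.mem_sup, Ideal.mem_span_singleton_mul]
      using hc'
  obtain ⟨t, ht⟩ := dvd_mul hb hq
  obtain ⟨u, hu⟩ := dvd_mul ha hq
  obtain ⟨v, hv⟩ := dvd_mul hb hp
  refine ⟨t, ⟨u, ?_⟩, ⟨v, ?_⟩⟩ <;> apply (mul_cancel_left_mem_nonZeroDivisors hc).1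
  · linear_combination -a * ht + b * hu
  · linear_combination -b * hpq + b * ht + a * hv

theorem isArithmetical_of_span_pair_invertible [IsDomain R]
    (h : ∀ a b : R, Ideal.span {a, b} ≠ ⊥ →
      ∃ (J : Ideal R) (c : R), c ≠ 0 ∧ Ideal.span {a, b} * J = Ideal.span {c}) :
    IsArithmetical R := by
  intro a b
  rcases eq_or_ne (Ideal.span {a, b}) ⊥ with h0 | h0
  · have : a = 0 ∧ b = 0 := by simpa [Ideal.span_eq_bot] using h0
    exact ⟨0, by simp [this]⟩
  · obtain ⟨J, c, hc, hJ⟩ := h a b h0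
    exact exists_dvd_mul_of_span_pair_mul_eq (mem_nonZeroDivisors_of_ne_zero hc) hJ

theorem IsArithmetical.of_surjective (hR : IsArithmetical R) (f : R →+* A)
    (hf : Function.Surjective f) : IsArithmetical A := by
  intro a b
  obtain ⟨a, rfl⟩ := hf a
  obtain ⟨b, rfl⟩ := hf b
  obtain ⟨t, hba, hab⟩ := hR a b
  exact ⟨f t, by simpa using map_dvd f hba, by simpa using map_dvd f hab⟩

end Arithmetical

section KrullDimension

theorem krullDimLE_one_of_forall_prime_not_lt_lt {R : Type*} [CommRing R]
    (h : ∀ p q r : Ideal R, p.IsPrime → q.IsPrime → r.IsPrime → p < q → q < r → False) :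
    Ring.KrullDimLE 1 R := by
  refine Ring.krullDimLE_one_iff.2 fun q hq => or_iff_not_imp_right.2 fun hmax => ?_
  obtain ⟨m, hm, hqm⟩ := q.exists_le_maximal hq.ne_top
  have hlt : q < m := hqm.lt_of_ne fun heq => hmax (heq ▸ hm)
  refine ⟨⟨hq, bot_le⟩, fun p hp hpq => ?_⟩
  by_contra hqp
  exact h p q m hp.1 hq hm.isPrime (lt_of_le_not_ge hpq hqp) hlt

theorem krullDimLE_zero_quotient_of_ne_bot {R : Type*} [CommRing R] [IsDomain R]
    [Ring.KrullDimLE 1 R] {I : Ideal R} (hI : I ≠ ⊥) : Ring.KrullDimLE 0 (R ⧸ I) :=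
  Ideal.krullDimLE_zero_quotient_iff_forall_minimalPrimes_isMaximal.2 fun _ hp =>
    hp.1.1.isMaximal_of_ne_bot (ne_bot_of_le_ne_bot hI hp.1.2)

variable {A : Type*} [CommRing A] [Ring.KrullDimLE 0 A]

theorem exists_pow_succ_dvd_pow (t : A) : ∃ n : ℕ, t ^ (n + 1) ∣ t ^ n := by
  let S : Submonoid A :=
    { carrier := {x | ∃ (n : ℕ) (y : A), x = t ^ n * (1 - t * y)}
      one_mem' := ⟨0, 0, by simp⟩
      mul_mem' := by
        rintro _ _ ⟨n, y, rfl⟩ ⟨m, z, rfl⟩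
        exact ⟨n + m, y + z - t * y * z, by ring⟩ }
  obtain ⟨n, y, h⟩ : (0 : A) ∈ S := by
    by_contra h0
    obtain ⟨p, hp, -, hpS⟩ := Ideal.exists_le_prime_disjoint ⊥ S (by simpa using h0)
    have not_mem {x : A} (hx : x ∈ S) : x ∉ p := fun hxp => Set.disjoint_left.1 hpS hxp hx
    obtain ⟨y, i, hi, hy⟩ := hp.isMaximal'.exists_inv (not_mem ⟨1, 0, by simp⟩ : t ∉ p)
    exact not_mem ⟨0, y, by linear_combination hy⟩ hi
  exact ⟨n, y, by linear_combination -h⟩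

theorem exists_isIdempotentElem_dvd_and_one_sub_dvd (t : A) :
    ∃ e : A, IsIdempotentElem e ∧ t ∣ e ∧ 1 - t ∣ 1 - e := by
  obtain ⟨n, y, hy⟩ := exists_pow_succ_dvd_pow t
  obtain ⟨c, hc⟩ : 1 - t * y ∣ 1 - (t * y) ^ (n + 1) := by
    simpa using sub_dvd_pow_sub_pow 1 (t * y) (n + 1)
  have hfix : t ^ (n + 1) * (t * y) ^ (n + 1) = t ^ (n + 1) := by
    linear_combination -t ^ (n + 1) * hc - t * c * hy
  refine ⟨(t * y) ^ (n + 1), ?_, (dvd_mul_right t y).trans (dvd_pow_self _ n.succ_ne_zero), ?_⟩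
  · rw [IsIdempotentElem]
    linear_combination y ^ (n + 1) * hfix
  · have hmul : 1 - (t * y) ^ (n + 1) = (1 - t ^ (n + 1)) * (1 - (t * y) ^ (n + 1)) := by
      linear_combination -hfix
    rw [hmul]
    exact (by simpa using sub_dvd_pow_sub_pow 1 t (n + 1) : 1 - t ∣ 1 - t ^ (n + 1)).mul_right _

theorem IsArithmetical.dvdTotalUpToIdempotent (hA : IsArithmetical A) :
    DvdTotalUpToIdempotent A := by
  intro a b
  obtain ⟨t, hba, hab⟩ := hA a b
  obtain ⟨e, he, hte, hte'⟩ := exists_isIdempotentElem_dvd_and_one_sub_dvd t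
  exact ⟨e, he, hba.trans (mul_dvd_mul_right hte a), hab.trans (mul_dvd_mul_right hte' b)⟩

end KrullDimension

section Pivot

variable {A F F' : Type*} [CommRing A] [AddCommGroup F] [Module A F] [AddCommGroup F'] [Module A F']

theorem DvdTotalUpToIdempotent.exists_glue_dvd (hA : DvdTotalUpToIdempotent A) (a b : A) :
    ∃ e : A, IsIdempotentElem e ∧ e * b + (1 - e) * a ∣ a ∧ e * b + (1 - e) * a ∣ b := by
  obtain ⟨e, he, ⟨c, hc⟩, ⟨c', hc'⟩⟩ := hA a b
  refine ⟨e, he, ⟨e * c + (1 - e), ?_⟩, ⟨e + (1 - e) * c', ?_⟩⟩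
  · linear_combination e * hc + (-2 * a - b * c + b + a * c) * he.eq
  · linear_combination (1 - e) * hc' + (-2 * b + b * c' + a - a * c') * he.eq

/-- The isomorphism that agrees with `s` on `eF` and with `t` on `(1 - e)F`, for an idempotent
`e`. -/
def gluedEquiv {e : A} (he : IsIdempotentElem e) (s t : F ≃ₗ[A] F') : F ≃ₗ[A] F' :=
  LinearEquiv.ofLinearMap (e • s.toLinearMap + (1 - e) • t.toLinearMap)
    (e • s.symm.toLinearMap + (1 - e) • t.symm.toLinearMap)
    (by ext x; simp [smul_smul, ← add_smul, he.eq, he.one_sub.eq, he.mul_one_sub_self,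
      he.one_sub_mul_self])
    (by ext x; simp [smul_smul, ← add_smul, he.eq, he.one_sub.eq, he.mul_one_sub_self,
      he.one_sub_mul_self])

theorem gluedEquiv_apply {e : A} (he : IsIdempotentElem e) (s t : F ≃ₗ[A] F') (x : F) :
    gluedEquiv he s t x = e • s x + (1 - e) • t x := rfl

theorem gluedEquiv_glue {e : A} (he : IsIdempotentElem e) (s t : F ≃ₗ[A] F') (x y : F) :
    gluedEquiv he s t (e • x + (1 - e) • y) = e • s x + (1 - e) • t y := by
  simp [gluedEquiv_apply, smul_smul, he.eq, he.one_sub.eq, he.mul_one_sub_self, he.one_sub_mul_self]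

theorem DvdTotalUpToIdempotent.directed_dvd (hA : DvdTotalUpToIdempotent A) (K : Submodule A F)
    (φ : F' →ₗ[A] A) :
    Directed (fun a b => b ∣ a) fun p : K × (F ≃ₗ[A] F') => φ (p.2 p.1) := by
  rintro ⟨x, s⟩ ⟨y, t⟩
  obtain ⟨e, he, hx, hy⟩ := hA.exists_glue_dvd (φ (s x)) (φ (t y))
  refine ⟨⟨e • y + (1 - e) • x, gluedEquiv he t s⟩, ?_⟩
  simpa [gluedEquiv_glue] using And.intro hx hy

end Pivot

section Smith

open scoped Pointwise

variable {A : Type*} [CommRing A] {ι : Type*}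

theorem mem_smul_top_pi_iff {g : A} {x : ι → A} :
    x ∈ g • (⊤ : Submodule A (ι → A)) ↔ ∀ i, g ∣ x i := by
  simp only [Submodule.mem_smul_pointwise_iff_exists, Submodule.mem_top, true_and, funext_iff,
    Pi.smul_apply, smul_eq_mul, dvd_def, eq_comm, Classical.skolem]

theorem map_le_smul_top {M N : Type*} [AddCommGroup M] [Module A M] [AddCommGroup N] [Module A N]
    {g : A} {K : Submodule A M} (hK : K ≤ g • ⊤) (f : M →ₗ[A] N) : K.map f ≤ g • ⊤ := by
  refine (Submodule.map_mono hK).trans ?_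
  rw [Submodule.map_pointwise_smul]
  exact smul_mono_right g le_top

theorem DvdTotalUpToIdempotent.exists_pivot [Finite ι] (hA : DvdTotalUpToIdempotent A) (i₀ : ι)
    {K : Submodule A (ι → A)} (hK : K.FG) :
    ∃ s : (ι → A) ≃ₗ[A] (ι → A), ∃ k ∈ K.map s.toLinearMap, K.map s.toLinearMap ≤ k i₀ • ⊤ := by
  classical
  have := Fintype.ofFinite ι
  obtain ⟨S, rfl⟩ := hK
  let K := Submodule.span A (S : Set (ι → A))
  have : IsTrans A fun a b => b ∣ a := ⟨fun _ _ _ hba hcb => hcb.trans hba⟩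
  -- Swapping coordinates turns the `j`-th entry of `y` into the pivot entry.
  let entry (p : S × ι) : K × ((ι → A) ≃ₗ[A] (ι → A)) :=
    (⟨p.1, Submodule.subset_span p.1.2⟩, LinearEquiv.funCongrLeft A A (Equiv.swap i₀ p.2))
  obtain ⟨⟨k, s⟩, hks⟩ := (hA.directed_dvd K (LinearMap.proj i₀)).finset_le
    (Finset.univ.image entry)
  refine ⟨s, s k, Submodule.mem_map_of_mem k.2, map_le_smul_top (Submodule.span_le.2 ?_) _⟩
  refine fun y hy => mem_smul_top_pi_iff.2 fun j => ?_
  simpa [entry, LinearMap.funLeft_apply] using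
    hks _ (Finset.mem_image_of_mem entry (Finset.mem_univ (⟨y, hy⟩, j)))

theorem exists_map_eq_prod_span_singleton {N : Type*} [AddCommGroup N] [Module A N]
    {K : Submodule A (A × N)} {k : A × N} (hk : k ∈ K) (hK : K ≤ k.1 • ⊤) :
    ∃ u : (A × N) ≃ₗ[A] (A × N), K.map u.toLinearMap =
      Submodule.prod (Ideal.span {k.1}) (K.map (LinearMap.snd A A N ∘ₗ u.toLinearMap)) := by
  obtain ⟨c, -, hc⟩ := (Submodule.mem_smul_pointwise_iff_exists _ _ _).1 (hK hk)
  -- The shear that carries the pivot vector `k` to `(k.1, 0)`.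
  let u : (A × N) ≃ₗ[A] (A × N) :=
    (LinearEquiv.refl A A).skewProd (LinearEquiv.refl A N) (LinearMap.toSpanSingleton A N (-c.2))
  have huk : u k = (k.1, 0) := by
    have : k.2 = k.1 • c.2 := congrArg Prod.snd hc.symm
    simp [u, this]
  refine ⟨u, le_antisymm ?_ ?_⟩
  · rintro _ ⟨x, hx, rfl⟩
    obtain ⟨z, -, rfl⟩ := (Submodule.mem_smul_pointwise_iff_exists _ _ _).1 (hK hx)
    exact ⟨Ideal.mem_span_singleton.2 ⟨z.1, by simp [u]⟩, Submodule.mem_map_of_mem hx⟩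
  · rintro ⟨a, _⟩ ⟨ha, x, hx, rfl⟩
    obtain ⟨b, rfl⟩ := Ideal.mem_span_singleton.1 ha
    obtain ⟨z, -, rfl⟩ := (Submodule.mem_smul_pointwise_iff_exists _ _ _).1 (hK hx)
    refine ⟨k.1 • z + (b - z.1) • k, K.add_mem hx (K.smul_mem _ hk), ?_⟩
    simp only [LinearEquiv.coe_coe, map_add, map_smul, huk]
    ext
    · simp [u, mul_sub, mul_comm]
    · simp [u]

theorem map_consLinearEquiv_prod_pi {n : ℕ} (g : A) (d : Fin n → A) :
    (Submodule.prod (Ideal.span {g}) (Submodule.pi Set.univ fun i => Ideal.span {d i})).map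
        (Fin.consLinearEquiv A fun _ : Fin (n + 1) => A).toLinearMap =
      Submodule.pi Set.univ fun i : Fin (n + 1) =>
        Ideal.span {Fin.cons (α := fun _ => A) g d i} := by
  ext x
  rw [Submodule.mem_map_equiv]
  simp [Submodule.mem_pi, Fin.forall_fin_succ, Fin.tail]

theorem DvdTotalUpToIdempotent.exists_map_eq_pi_span_singleton (hA : DvdTotalUpToIdempotent A)
    {n : ℕ} {K : Submodule A (Fin n → A)} (hK : K.FG) :
    ∃ (s : (Fin n → A) ≃ₗ[A] (Fin n → A)) (d : Fin n → A), (∀ i j, i ≤ j → d i ∣ d j) ∧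
      K.map s.toLinearMap = Submodule.pi Set.univ fun i => Ideal.span {d i} := by
  induction n with
  | zero => exact ⟨LinearEquiv.refl _ _, 0, fun i => i.elim0, Subsingleton.elim _ _⟩
  | succ n ih =>
    obtain ⟨s, k, hk, hKk⟩ := hA.exists_pivot 0 hK
    let cons := Fin.consLinearEquiv A fun _ : Fin (n + 1) => A
    let K₁ := (K.map s.toLinearMap).map cons.symm.toLinearMap
    have hk₁ : cons.symm k ∈ K₁ := Submodule.mem_map_of_mem hk
    have hK₁ : K₁ ≤ k 0 • ⊤ := map_le_smul_top hKk _
    obtain ⟨u, hu⟩ := exists_map_eq_prod_span_singleton hk₁ hK₁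
    let f := LinearMap.snd A A (Fin n → A) ∘ₗ u.toLinearMap
    obtain ⟨s', d, hd, hs'⟩ := ih (K := K₁.map f) (((hK.map _).map _).map f)
    have hkd : ∀ i, k 0 ∣ d i := by
      have hle := map_le_smul_top (map_le_smul_top hK₁ f) s'.toLinearMap
      rw [hs'] at hle
      exact mem_smul_top_pi_iff.1 (hle fun i _ => Ideal.mem_span_singleton_self (d i))
    refine ⟨s ≪≫ₗ cons.symm ≪≫ₗ u ≪≫ₗ (LinearEquiv.refl A A).prodCongr s' ≪≫ₗ cons,
      Fin.cons (k 0) d, ?_, ?_⟩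
    · simpa [Fin.forall_fin_succ] using ⟨hkd, hd⟩
    · rw [← map_consLinearEquiv_prod_pi, ← hs']
      simp only [LinearEquiv.coe_trans, Submodule.map_comp, LinearEquiv.coe_prodCongr]
      rw [hu, LinearMap.prodMap_map_prod]
      simp [f, cons]

theorem DvdTotalUpToIdempotent.exists_linearEquiv_pi_quotient (hA : DvdTotalUpToIdempotent A)
    (M : Type*) [AddCommGroup M] [Module A M] [Module.FinitePresentation A M] :
    ∃ (n : ℕ) (d : Fin n → A), (∀ i j, i ≤ j → d i ∣ d j) ∧
      Nonempty (M ≃ₗ[A] ((i : Fin n) → A ⧸ Ideal.span {d i})) := by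
  obtain ⟨n, K, eM, hK⟩ := Module.FinitePresentation.exists_fin A M
  obtain ⟨s, d, hd, hs⟩ := hA.exists_map_eq_pi_span_singleton hK
  exact ⟨n, d, hd, ⟨eM ≪≫ₗ Submodule.Quotient.equiv _ _ s hs ≪≫ₗ Submodule.quotientPi _⟩⟩

end Smith

section Descent

open scoped TensorProduct

variable {R : Type*} [CommRing R] {I : Ideal R}

theorem exists_linearEquiv_pi_quotient_of_le_annihilator (hI : I.FG)
    (hA : DvdTotalUpToIdempotent (R ⧸ I)) (M : Type*) [AddCommGroup M] [Module R M]
    [Module.FinitePresentation R M] (hM : I ≤ Module.annihilator R M) :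
    ∃ (n : ℕ) (a : Fin n → Ideal R), (∀ i j, i ≤ j → a j ≤ a i) ∧
      (∀ i, (a i).FG ∧ I ≤ a i) ∧ Nonempty (M ≃ₗ[R] ((i : Fin n) → R ⧸ a i)) := by
  obtain ⟨n, d, hd, ⟨eA⟩⟩ := hA.exists_linearEquiv_pi_quotient ((R ⧸ I) ⊗[R] M)
  choose r hr using fun i => Ideal.Quotient.mk_surjective (d i)
  have map_span (i : Fin n) :
      (Ideal.span {r i}).map (Ideal.Quotient.mkₐ R I) = Ideal.span {d i} := by
    simp [Ideal.map_span, hr]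
  have hIM : I • (⊤ : Submodule R M) = ⊥ :=
    Submodule.le_annihilator_iff.1 (by rwa [Submodule.annihilator_top])
  let eM : M ≃ₗ[R] (R ⧸ I) ⊗[R] M :=
    (Submodule.quotEquivOfEqBot _ hIM).symm ≪≫ₗ (TensorProduct.quotTensorEquivQuotSMul M I).symm
  let e (i : Fin n) : ((R ⧸ I) ⧸ Ideal.span {d i}) ≃ₗ[R] R ⧸ I ⊔ Ideal.span {r i} :=
    (Ideal.quotientEquivAlgOfEq R (map_span i).symm).toLinearEquiv ≪≫ₗ
      (DoubleQuot.quotQuotEquivQuotSupₐ R I (Ideal.span {r i})).toLinearEquiv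
  refine ⟨n, fun i => I ⊔ Ideal.span {r i}, ?_, ?_,
    ⟨eM ≪≫ₗ eA.restrictScalars R ≪≫ₗ LinearEquiv.piCongrRight e⟩⟩
  · intro i j hij
    have hmem : Ideal.Quotient.mk I (r j) ∈ (Ideal.span {r i}).map (Ideal.Quotient.mk I) := by
      rw [Ideal.map_span, Set.image_singleton, hr, hr, Ideal.mem_span_singleton]
      exact hd i j hij
    rw [Ideal.mem_quotient_iff_mem_sup, sup_comm] at hmem
    exact sup_le le_sup_left ((Ideal.span_singleton_le_iff_mem _).2 hmem)
  · exact fun i => ⟨Submodule.FG.sup hI (Submodule.fg_span_singleton _), le_sup_left⟩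

end Descent

/-- Over a Prüfer domain of Krull dimension at most 1, every finitely presented torsion
module is isomorphic to a direct sum `⊕ᵢ R⧸aᵢ` with a decreasing chain of nonzero
finitely generated ideals `a₁ ⊇ ⋯ ⊇ aₙ`. -/
theorem stmt_16 {R : Type*} [CommRing R] [IsDomain R]
    (hpruf : ∀ I : Ideal R, I.FG → I ≠ ⊥ →
      ∃ (J : Ideal R) (c : R), J.FG ∧ c ≠ 0 ∧ I * J = Ideal.span {c})
    (hdim : ∀ p q r : Ideal R, p.IsPrime → q.IsPrime → r.IsPrime → p < q → q < r → False)
    (M : Type*) [AddCommGroup M] [Module R M] [Module.FinitePresentation R M]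
    (htors : ∀ x : M, ∃ d : R, d ≠ 0 ∧ d • x = 0) :
    ∃ (n : ℕ) (a : Fin n → Ideal R),
      (∀ i j : Fin n, i ≤ j → a j ≤ a i) ∧
      (∀ i, (a i).FG ∧ a i ≠ ⊥) ∧
      Nonempty (M ≃ₗ[R] ((i : Fin n) → R ⧸ a i)) := by
  have hR : IsArithmetical R := isArithmetical_of_span_pair_invertible fun a b hab =>
    let ⟨J, c, _, hc, hJ⟩ := hpruf _ (Submodule.fg_span (Set.toFinite {a, b})) hab
    ⟨J, c, hc, hJ⟩
  have : Ring.KrullDimLE 1 R := krullDimLE_one_of_forall_prime_not_lt_lt hdim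
  obtain ⟨d, hdM, hd⟩ := Submodule.annihilator_top_inter_nonZeroDivisors (R := R) (M := M)
    fun x => let ⟨c, hc, hcx⟩ := htors x; ⟨⟨c, mem_nonZeroDivisors_of_ne_zero hc⟩, hcx⟩
  have hspan : Ideal.span {d} ≠ ⊥ := by
    simpa [Ideal.span_singleton_eq_bot] using nonZeroDivisors.ne_zero hd
  have := krullDimLE_zero_quotient_of_ne_bot hspan
  have hA : DvdTotalUpToIdempotent (R ⧸ Ideal.span {d}) :=
    (hR.of_surjective _ Ideal.Quotient.mk_surjective).dvdTotalUpToIdempotent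
  obtain ⟨n, a, ha, hda, e⟩ := exists_linearEquiv_pi_quotient_of_le_annihilator
    (Submodule.fg_span_singleton d) hA M
    ((Ideal.span_singleton_le_iff_mem _).2 (Submodule.annihilator_top (R := R) (M := M) ▸ hdM))
  exact ⟨n, a, ha, fun i => ⟨(hda i).1, ne_bot_of_le_ne_bot hspan (hda i).2⟩, e⟩
end
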